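/- arXiv:2509.22142 — 3 statements merged into one kernel-verified Lean document; each statement's English description precedes it below -/
import Mathlib

section
/- Let P ⊆ ℤ^n_{≥0} be a polymatroid over [n] with rank function f, and let P* be the polymatroid with rank function f* given by f*(I) = f([n]\I) − f([n]) + Σ_{i∈I} f({i}). Then for every positive integer j, C_j(P) = {[n]\H : H ∈ H_j(P*)}. -/
open Finset Polynomial

/-- `f` is the rank function of a polymatroid over the ground set `[n]` (encoded as `Fin n`):
normalization, monotonicity and submodularity. -/
def IsPolymatroidRank (n : ℕ) (f : Finset (Fin n) → ℕ) : Prop :=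
  f ∅ = 0 ∧ (∀ I J : Finset (Fin n), I ⊆ J → f I ≤ f J) ∧
    ∀ I J : Finset (Fin n), f (I ∪ J) + f (I ∩ J) ≤ f I + f J

/-- The set of bases of the polymatroid `P ⊆ ℤ^n_{≥0}` with rank function `f`:
all nonnegative integer vectors `a` with `∑_{i ∈ I} a i ≤ f I` for every `I ⊆ [n]`
and `∑_{i ∈ [n]} a i = f [n]`.  (Every such vector has entries `≤ f [n]`, whence the
bounding box used to produce a `Finset`.) -/
def polyBases (n : ℕ) (f : Finset (Fin n) → ℕ) : Finset (Fin n → ℤ) :=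
  ((Finset.univ : Finset (Fin n → Fin (f Finset.univ + 1))).image
      (fun a i => ((a i : ℕ) : ℤ))).filter
    fun a => (∀ i, 0 ≤ a i) ∧ (∀ I : Finset (Fin n), ∑ i ∈ I, a i ≤ (f I : ℤ)) ∧
      ∑ i, a i = (f Finset.univ : ℤ)

/-- The externally active indices of a basis `a`: those `i` such that
`a + e_i - e_j ∉ P` for every `j < i`. -/
def extAct (n : ℕ) (f : Finset (Fin n) → ℕ) (a : Fin n → ℤ) : Finset (Fin n) :=
  Finset.univ.filter fun i => ∀ j, j < i →
    (fun t => a t + (if t = i then 1 else 0) - (if t = j then 1 else 0)) ∉ polyBases n f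

/-- The internally active indices of a basis `a`: those `i` such that
`a - e_i + e_j ∉ P` for every `j < i`. -/
def intAct (n : ℕ) (f : Finset (Fin n) → ℕ) (a : Fin n → ℤ) : Finset (Fin n) :=
  Finset.univ.filter fun i => ∀ j, j < i →
    (fun t => a t - (if t = i then 1 else 0) + (if t = j then 1 else 0)) ∉ polyBases n f

/-- The exterior polynomial `X_P(y) = ∑_{a ∈ P} y^(n - |Ext(a)|)`. -/
noncomputable def exteriorPoly (n : ℕ) (f : Finset (Fin n) → ℕ) : Polynomial ℤ :=
  ∑ a ∈ polyBases n f, X ^ (n - (extAct n f a).card)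

/-- The interior polynomial `I_P(x) = ∑_{a ∈ P} x^(n - |Int(a)|)`. -/
noncomputable def interiorPoly (n : ℕ) (f : Finset (Fin n) → ℕ) : Polynomial ℤ :=
  ∑ a ∈ polyBases n f, X ^ (n - (intAct n f a).card)

/-- `r_k(P) = min { n - |F| : F ⊆ [n], f F ≤ f [n] - k }` (junk value `0` if no such `F`). -/
noncomputable def rk (n : ℕ) (f : Finset (Fin n) → ℕ) (k : ℕ) : ℕ :=
  sInf {m | ∃ F : Finset (Fin n), (f F : ℤ) ≤ (f Finset.univ : ℤ) - k ∧ m = n - F.card}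

/-- `r'_k(P) = min { |F| : F ⊆ [n], ∑_{i ∈ F} f {i} - f F ≥ k }` (junk value `0` if no such `F`). -/
noncomputable def rk' (n : ℕ) (f : Finset (Fin n) → ℕ) (k : ℕ) : ℕ :=
  sInf {m | ∃ F : Finset (Fin n), (k : ℤ) ≤ (∑ i ∈ F, (f {i} : ℤ)) - (f F : ℤ) ∧ m = F.card}

/-- `H_j(P)`: the flats `H` (i.e. `f (H ∪ {e}) > f H` for all `e ∉ H`) with
`f H = f [n] - 1` and `n - |H| = j`. -/
def Hset (n : ℕ) (f : Finset (Fin n) → ℕ) (j : ℕ) : Finset (Finset (Fin n)) :=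
  Finset.univ.filter fun H =>
    (∀ e, e ∉ H → f H < f (insert e H)) ∧ (f H : ℤ) = (f Finset.univ : ℤ) - 1 ∧
      n - H.card = j

/-- `C_j(P)`: the sets `C` with `|C| = j`, `∑_{i ∈ C} f {i} - f C = 1` and
`∑_{i ∈ C \ {j'}} f {i} = f (C \ {j'})` for every `j' ∈ C`. -/
def Cset (n : ℕ) (f : Finset (Fin n) → ℕ) (j : ℕ) : Finset (Finset (Fin n)) :=
  Finset.univ.filter fun C => C.card = j ∧
    (∑ i ∈ C, (f {i} : ℤ)) - (f C : ℤ) = 1 ∧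
    ∀ j' ∈ C, (∑ i ∈ C.erase j', (f {i} : ℤ)) = (f (C.erase j') : ℤ)

/-- The dual rank function `f*(I) = f([n] \ I) - f([n]) + ∑_{i ∈ I} f {i}`
(the subtraction is exact for a polymatroid rank function). -/
def fdual (n : ℕ) (f : Finset (Fin n) → ℕ) : Finset (Fin n) → ℕ :=
  fun I => f (Finset.univ \ I) + (∑ i ∈ I, f {i}) - f Finset.univ

/-!
The nullity `ν C = ∑ i ∈ C, f {i} - f C` of a set is the corank `f* [n] - f* ([n] \ C)` of its
complement in the dual. So "`ν C = 1`" says that `[n] \ C` has corank one in the dual, and, as `ν`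
takes nonnegative values, "`ν` vanishes after deleting any element of `C`" says that `f*` strictly
grows when any element is added to `[n] \ C`, i.e. that `[n] \ C` is a flat of the dual.
-/

section Nullity

/-- The nullity `∑ i ∈ C, f {i} - f C` of a set `C`, which for the rank function of a loopless
matroid is the usual `|C| - f C`. It takes values in `ℤ` because the difference of natural numbers
would be truncated where `f C` is the larger term. -/
def nullity {α : Type*} (f : Finset α → ℕ) (C : Finset α) : ℤ :=
  ∑ i ∈ C, (f {i} : ℤ) - f C

variable {α : Type*} [DecidableEq α] {f : Finset α → ℕ}

theorem le_sum_singleton_of_subadditive {M : Type*} [AddCommMonoid M] [Preorder M] [AddLeftMono M]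
    {g : Finset α → M} (hempty : g ∅ = 0) (hunion : ∀ I J, g (I ∪ J) ≤ g I + g J)
    (C : Finset α) : g C ≤ ∑ i ∈ C, g {i} := by
  simpa only [sup_singleton_eq_self] using
    apply_sup_le_sum (s := singleton) hempty (hunion _ _) C

theorem nullity_nonneg (hempty : f ∅ = 0) (hunion : ∀ I J, f (I ∪ J) ≤ f I + f J)
    (C : Finset α) : 0 ≤ nullity f C :=
  sub_nonneg.2 <| mod_cast le_sum_singleton_of_subadditive hempty hunion C

end Nullity

section Dual

variable {n j : ℕ} {f g : Finset (Fin n) → ℕ} {C D : Finset (Fin n)}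

theorem IsPolymatroidRank.union_le_add (hf : IsPolymatroidRank n f) (I J : Finset (Fin n)) :
    f (I ∪ J) ≤ f I + f J :=
  (Nat.le_add_right _ _).trans (hf.2.2 I J)

theorem mem_Cset : C ∈ Cset n f j ↔
    #C = j ∧ nullity f C = 1 ∧ ∀ e ∈ C, nullity f (C.erase e) = 0 := by
  simp only [Cset, nullity, mem_filter_univ, sub_eq_zero]

theorem compl_mem_Hset : Cᶜ ∈ Hset n g j ↔
    (∀ e ∈ C, g Cᶜ < g (C.erase e)ᶜ) ∧ (g Cᶜ : ℤ) = g univ - 1 ∧ #C = j := by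
  have card_sub_card_compl : n - #Cᶜ = #C := by
    simpa using (card_compl Cᶜ).symm
  simp only [Hset, mem_filter_univ, mem_compl, not_not, compl_erase, card_sub_card_compl]

theorem cast_fdual (hempty : f ∅ = 0) (hunion : ∀ I J, f (I ∪ J) ≤ f I + f J)
    (I : Finset (Fin n)) : (fdual n f I : ℤ) = f Iᶜ + ∑ i ∈ I, (f {i} : ℤ) - f univ := by
  have rank_univ_le : f univ ≤ f Iᶜ + ∑ i ∈ I, f {i} :=
    calc f univ = f (Iᶜ ∪ I) := by rw [union_comm, union_compl]
      _ ≤ f Iᶜ + f I := hunion _ _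
      _ ≤ f Iᶜ + ∑ i ∈ I, f {i} := by
        gcongr
        exact le_sum_singleton_of_subadditive hempty hunion I
  rw [fdual, ← compl_eq_univ_sdiff, Nat.cast_sub rank_univ_le, Nat.cast_add, Nat.cast_sum]

theorem cast_fdual_compl (hempty : f ∅ = 0) (hunion : ∀ I J, f (I ∪ J) ≤ f I + f J)
    (C : Finset (Fin n)) : (fdual n f Cᶜ : ℤ) = fdual n f univ - nullity f C := by
  have sum_split := sum_add_sum_compl C fun i => (f {i} : ℤ)
  rw [cast_fdual hempty hunion, cast_fdual hempty hunion, compl_compl, compl_univ, hempty,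
    Nat.cast_zero, nullity]
  linarith

theorem fdual_compl_lt_fdual_compl_iff (hempty : f ∅ = 0)
    (hunion : ∀ I J, f (I ∪ J) ≤ f I + f J) :
    fdual n f Cᶜ < fdual n f Dᶜ ↔ nullity f D < nullity f C := by
  rw [← Nat.cast_lt (α := ℤ), cast_fdual_compl hempty hunion, cast_fdual_compl hempty hunion,
    sub_lt_sub_iff_left]

theorem mem_Cset_iff_compl_mem_Hset_fdual (hempty : f ∅ = 0)
    (hunion : ∀ I J, f (I ∪ J) ≤ f I + f J) :
    C ∈ Cset n f j ↔ Cᶜ ∈ Hset n (fdual n f) j := by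
  have nullity_lt_one_iff (D : Finset (Fin n)) : nullity f D < 1 ↔ nullity f D = 0 := by
    have nonneg := nullity_nonneg hempty hunion D
    lia
  rw [mem_Cset, compl_mem_Hset, cast_fdual_compl hempty hunion, sub_right_inj]
  simp only [fdual_compl_lt_fdual_compl_iff hempty hunion]
  constructor
  · rintro ⟨hcard, hone, hzero⟩
    exact ⟨fun e he => by rw [hone, nullity_lt_one_iff, hzero e he], hone, hcard⟩
  · rintro ⟨hflat, hone, hcard⟩
    exact ⟨hcard, hone, fun e he => (nullity_lt_one_iff _).1 (hone ▸ hflat e he)⟩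

end Dual

theorem stmt6_general (n : ℕ) (f : Finset (Fin n) → ℕ) (hempty : f ∅ = 0)
    (hunion : ∀ I J : Finset (Fin n), f (I ∪ J) ≤ f I + f J) (j : ℕ) :
    Cset n f j = (Hset n (fdual n f) j).image fun H => Finset.univ \ H := by
  ext C
  simp only [← compl_eq_univ_sdiff, mem_image, mem_Cset_iff_compl_mem_Hset_fdual hempty hunion]
  constructor
  · intro hC
    exact ⟨Cᶜ, hC, compl_compl C⟩
  · rintro ⟨H, hH, rfl⟩
    rwa [compl_compl]

/-- For every positive integer `j`,
`C_j(P) = { [n] \ H : H ∈ H_j(P*) }` where `P*` is the dual polymatroid. -/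
theorem stmt6 (n : ℕ) (f : Finset (Fin n) → ℕ) (hf : IsPolymatroidRank n f)
    (j : ℕ) (hj : 1 ≤ j) :
    Cset n f j = (Hset n (fdual n f) j).image fun H => Finset.univ \ H :=
  stmt6_general n f hf.1 hf.union_le_add j
end

section
/- Let P ⊆ ℤ^n_{≥0} be a polymatroid over [n] with rank function f. If 2 < r_2(P), then |H_1(P)| ≤ 1, i.e., there is at most one flat H with f(H) = f([n])−1 and n−|H| = 1. -/
open Finset Polynomial

/-!
Two distinct flats of rank `f [n] - 1` are incomparable, so their union has full rank and, by
submodularity, their intersection has rank at most `f [n] - 2`. The complement of the intersection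
is the union of the two complements, whence `r_2 ≤ i + j` as soon as `H_i` and `H_j` contain
distinct flats.
-/

/-- A flat of a rank function, as in `Hset`: a set whose rank goes up whenever an element is added.
The ground set is the type `α`, and ranks may lie in any preorder. -/
def IsFlat {α β : Type*} [DecidableEq α] [Preorder β] (f : Finset α → β) (H : Finset α) : Prop :=
  ∀ e, e ∉ H → f H < f (insert e H)

namespace IsFlat

variable {α β : Type*} [DecidableEq α] [Preorder β] {f : Finset α → β} {H K : Finset α}

theorem lt_of_ssubset (hH : IsFlat f H) (hf : Monotone f) (hHK : H ⊂ K) : f H < f K := by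
  obtain ⟨e, he, heK⟩ := ssubset_iff.mp hHK
  exact (hH e he).trans_le (hf heK)

theorem lt_union_of_ne (hH : IsFlat f H) (hK : IsFlat f K) (hf : Monotone f)
    (hrank : f H = f K) (hne : H ≠ K) : f H < f (H ∪ K) := by
  have hKH : ¬ K ⊆ H := fun h ↦
    (hK.lt_of_ssubset hf (h.ssubset_of_ne hne.symm)).ne hrank.symm
  exact hH.lt_of_ssubset hf (left_lt_sup.mpr hKH)

end IsFlat

section FinGroundSet

variable {n : ℕ} {f : Finset (Fin n) → ℕ}

theorem rk_le_card_compl {k : ℕ} {F : Finset (Fin n)} (hF : f F + k ≤ f univ) :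
    rk n f k ≤ #Fᶜ :=
  Nat.sInf_le ⟨F, by omega, by rw [card_compl, Fintype.card_fin]⟩

theorem mem_Hset_iff {j : ℕ} {H : Finset (Fin n)} :
    H ∈ Hset n f j ↔ IsFlat f H ∧ f H + 1 = f univ ∧ #Hᶜ = j := by
  rw [Hset, mem_filter_univ, IsFlat, card_compl, Fintype.card_fin, eq_sub_iff_add_eq]
  norm_cast

theorem rk_two_le_add_of_mem_Hset {i j : ℕ} {H K : Finset (Fin n)} (hf : IsPolymatroidRank n f)
    (hH : H ∈ Hset n f i) (hK : K ∈ Hset n f j) (hne : H ≠ K) : rk n f 2 ≤ i + j := by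
  obtain ⟨hflatH, hrankH, rfl⟩ := mem_Hset_iff.mp hH
  obtain ⟨hflatK, hrankK, rfl⟩ := mem_Hset_iff.mp hK
  obtain ⟨-, hmono, hsubmod⟩ := hf
  have hunion : f H < f (H ∪ K) := hflatH.lt_union_of_ne hflatK hmono (by omega) hne
  have hinter : f (H ∩ K) + 2 ≤ f univ := by
    have := hsubmod H K
    omega
  calc rk n f 2 ≤ #(H ∩ K)ᶜ := rk_le_card_compl hinter
    _ = #(Hᶜ ∪ Kᶜ) := by rw [compl_inter]
    _ ≤ #Hᶜ + #Kᶜ := card_union_le _ _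

end FinGroundSet

theorem stmt9_general (n : ℕ) (f : Finset (Fin n) → ℕ) (hf : IsPolymatroidRank n f) (j : ℕ)
    (h2 : 2 * j < rk n f 2) : (Hset n f j).card ≤ 1 := by
  refine card_le_one.mpr fun H hH K hK ↦ by_contra fun hne ↦ ?_
  have := rk_two_le_add_of_mem_Hset hf hH hK hne
  omega

/-- If `2 < r_2(P)` then `|H_1(P)| ≤ 1`. -/
theorem stmt9 (n : ℕ) (f : Finset (Fin n) → ℕ) (hf : IsPolymatroidRank n f)
    (h2 : 2 < rk n f 2) : (Hset n f 1).card ≤ 1 :=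
  stmt9_general n f hf 1 h2
end

section
/- Let P ⊆ ℤ^n_{≥0} be a polymatroid over [n] with rank function f, and let t ∈ [n] satisfy f([n]\{t}) = f([n]). For j ≥ 0, let H^t_j(P) = {H ∈ H_j(P) : t ∉ H}. Then {H ∪ {t} : H ∈ H_j(P̂^t_k)} = H_j(P) \ H^t_j(P) holds in each of the following cases: (a) k = f({t}) and 0 ≤ j < r_2(P); (b) k ∈ T_t with 0 < k < f({t}) and 0 ≤ j < r_2(P)−1. -/
open Finset Polynomial

/-- `H_j(Q)` for a polymatroid `Q` over a ground set `S ⊆ [n]` with (ℤ-valued) rank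
function `g`: the flats `H ⊆ S` (i.e. `g (H ∪ {e}) > g H` for all `e ∈ S \ H`) with
`g H = g S - 1` and `|S| - |H| = j`. -/
def HjGen (n : ℕ) (S : Finset (Fin n)) (g : Finset (Fin n) → ℤ) (j : ℕ) :
    Finset (Finset (Fin n)) :=
  S.powerset.filter fun H =>
    (∀ e ∈ S \ H, g H < g (insert e H)) ∧ g H = g S - 1 ∧ S.card - H.card = j

/-!
If `f (H ∪ {t}) ≤ f H + k`, then submodularity gives `f (I ∪ {t}) ≤ f I + k` for every `I ⊇ H`, so
above `H` the minimum in the rank function of `P̂^t_k` is attained by `f (I ∪ {t}) - k`. This is the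
contraction by `t` up to a constant, and membership in `H_j` depends only on the differences of the
rank function above `H`; hence `H ↦ H ∪ {t}` maps `H_j(P̂^t_k)` onto the members of `H_j(P)`
containing `t`. The inequality holds for every `H` by subadditivity when `k = f {t}`, and for
`0 < k` it holds for sets `H` so large that `f H ≥ f [n] - 1`, which is what `j < r_2(P) - 1`
guarantees.
-/

theorem lt_add_of_lt_rk {n : ℕ} {f : Finset (Fin n) → ℕ} {k : ℕ} {F : Finset (Fin n)}
    (hF : n - F.card < rk n f k) : f univ < f F + k := by
  by_contra! hle
  exact Nat.notMem_of_lt_sInf hF ⟨F, by omega, rfl⟩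

/-- The rank function `f^t_k` of the slice `P̂^t_k` of `P` at `a_t = k`, `ℤ`-valued so that the
subtraction does not truncate. -/
def sliceRank {α : Type*} [DecidableEq α] (f : Finset α → ℕ) (t : α) (k : ℕ) (I : Finset α) : ℤ :=
  min (f I : ℤ) (f (insert t I) - k)

namespace IsPolymatroidRank

variable {n : ℕ} {f : Finset (Fin n) → ℕ} {H I : Finset (Fin n)}

theorem insert_add_le_add_insert (hf : IsPolymatroidRank n f) (t : Fin n) (hHI : H ⊆ I) :
    f (insert t I) + f H ≤ f I + f (insert t H) := by
  obtain ⟨-, hmono, hsubmod⟩ := hf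
  have hunion : I ∪ insert t H = insert t I := by
    rw [union_insert, union_eq_left.2 hHI]
  have hinter : H ⊆ I ∩ insert t H := subset_inter hHI (subset_insert t H)
  calc f (insert t I) + f H ≤ f (I ∪ insert t H) + f (I ∩ insert t H) := by
        rw [hunion]; exact Nat.add_le_add_left (hmono _ _ hinter) _
    _ ≤ f I + f (insert t H) := hsubmod _ _

theorem insert_le_add_singleton (hf : IsPolymatroidRank n f) (t : Fin n) (I : Finset (Fin n)) :
    f (insert t I) ≤ f I + f {t} :=
  le_of_add_le_left (hf.insert_add_le_add_insert t (empty_subset I))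

theorem insert_le_add_of_lt_rk_two (hf : IsPolymatroidRank n f) (t : Fin n)
    (hH : n - H.card < rk n f 2) {k : ℕ} (hk : 0 < k) : f (insert t H) ≤ f H + k := by
  have hmono : f (insert t H) ≤ f univ := hf.2.1 _ _ (subset_univ _)
  have hlarge : f univ < f H + 2 := lt_add_of_lt_rk hH
  omega

theorem sliceRank_eq_sub (hf : IsPolymatroidRank n f) {t : Fin n} {k : ℕ}
    (hH : f (insert t H) ≤ f H + k) (hHI : H ⊆ I) :
    sliceRank f t k I = f (insert t I) - k := by
  have := hf.insert_add_le_add_insert t hHI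
  exact min_eq_right (by omega)

end IsPolymatroidRank

section HjGen

variable {n : ℕ} {S H : Finset (Fin n)} {g g' : Finset (Fin n) → ℤ} {t : Fin n} {j : ℕ}

theorem mem_HjGen :
    H ∈ HjGen n S g j ↔
      H ⊆ S ∧ (∀ e ∈ S \ H, g H < g (insert e H)) ∧ g H = g S - 1 ∧ S.card - H.card = j := by
  rw [HjGen, mem_filter, mem_powerset]

theorem HjGen_congr
    (h : ∀ H ⊆ S, S.card - H.card = j → ∀ I, H ⊆ I → I ⊆ S → g I = g' I) :
    HjGen n S g j = HjGen n S g' j := by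
  refine filter_congr fun H hH => ?_
  have hHS : H ⊆ S := mem_powerset.1 hH
  simp only [← and_assoc]
  refine and_congr_left fun hcard => ?_
  have hg : ∀ I, H ⊆ I → I ⊆ S → g I = g' I := h H hHS hcard
  rw [hg H subset_rfl hHS, hg S hHS subset_rfl]
  refine and_congr_left' (forall₂_congr fun e he => ?_)
  rw [hg _ (subset_insert e H) (insert_subset (mem_sdiff.1 he).1 hHS)]

theorem HjGen_sliceRank {f : Finset (Fin n) → ℕ} (hf : IsPolymatroidRank n f) {k : ℕ}
    (hk : ∀ H ⊆ S, S.card - H.card = j → f (insert t H) ≤ f H + k) :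
    HjGen n S (sliceRank f t k) j = HjGen n S (fun I => (f (insert t I) : ℤ) - k) j :=
  HjGen_congr fun H hHS hcard _ hHI _ => hf.sliceRank_eq_sub (hk H hHS hcard) hHI

theorem mem_HjGen_erase_iff_insert_mem (htS : t ∈ S) (htH : t ∉ H) (c : ℤ) :
    H ∈ HjGen n (S.erase t) (fun I => g (insert t I) - c) j ↔ insert t H ∈ HjGen n S g j := by
  have hsub : H ⊆ S.erase t ↔ insert t H ⊆ S := by
    rw [subset_erase, insert_subset_iff, and_iff_left htH, and_iff_right htS]
  have hsdiff : S.erase t \ H = S \ insert t H := by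
    rw [erase_sdiff_comm, sdiff_insert]
  have hcard : (S.erase t).card - H.card = S.card - (insert t H).card := by
    rw [card_erase_of_mem htS, card_insert_of_notMem htH, Nat.sub_sub, Nat.add_comm]
  simp only [mem_HjGen, hsub, hsdiff, hcard, insert_erase htS, insert_comm t,
    sub_lt_sub_iff_right, sub_right_comm _ c, sub_left_inj]

theorem image_insert_HjGen_erase (htS : t ∈ S) (c : ℤ) :
    (HjGen n (S.erase t) (fun I => g (insert t I) - c) j).image (insert t) =
      (HjGen n S g j).filter (t ∈ ·) := by
  ext K
  rw [mem_image, mem_filter]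
  constructor
  · rintro ⟨H, hH, rfl⟩
    have htH : t ∉ H := (subset_erase.1 (mem_HjGen.1 hH).1).2
    exact ⟨(mem_HjGen_erase_iff_insert_mem htS htH c).1 hH, mem_insert_self t H⟩
  · rintro ⟨hK, htK⟩
    refine ⟨K.erase t, ?_, insert_erase htK⟩
    rwa [mem_HjGen_erase_iff_insert_mem htS (notMem_erase t K), insert_erase htK]

end HjGen

theorem stmt10_general (n : ℕ) (f : Finset (Fin n) → ℕ) (hf : IsPolymatroidRank n f)
    (t : Fin n) (k j : ℕ) (hcase : k = f {t} ∨ (0 < k ∧ j < rk n f 2 - 1)) :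
    (HjGen n (univ.erase t) (sliceRank f t k) j).image (fun H => insert t H) =
      HjGen n univ (fun I => (f I : ℤ)) j \
        ((HjGen n univ (fun I => (f I : ℤ)) j).filter fun H => t ∉ H) := by
  have hinsert : ∀ H ⊆ univ.erase t, (univ.erase t).card - H.card = j →
      f (insert t H) ≤ f H + k := by
    intro H _ hcard
    rw [card_erase_of_mem (mem_univ t), card_fin] at hcard
    rcases hcase with rfl | ⟨hk, hj⟩
    · exact hf.insert_le_add_singleton t H
    · exact hf.insert_le_add_of_lt_rk_two t (by omega) hk
  rw [HjGen_sliceRank hf hinsert, filter_not, Finset.sdiff_sdiff_eq_self (filter_subset _ _)]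
  exact image_insert_HjGen_erase (g := fun I => (f I : ℤ)) (mem_univ t) k

/-- Let `t ∈ [n]` with `f([n]\{t}) = f([n])`.  In each of the cases
(a) `k = f {t}` and `j < r_2(P)`, (b) `0 < k < f {t}` and `j < r_2(P) - 1`,
one has `{H ∪ {t} : H ∈ H_j(P̂^t_k)} = H_j(P) \ H^t_j(P)`, where `P̂^t_k` is the
polymatroid over `[n]\{t}` with rank function `I ↦ min (f I) (f (I ∪ {t}) - k)` and
`H^t_j(P) = {H ∈ H_j(P) : t ∉ H}`. -/
theorem stmt10 (n : ℕ) (f : Finset (Fin n) → ℕ) (hf : IsPolymatroidRank n f)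
    (t : Fin n) (ht : f (Finset.univ.erase t) = f Finset.univ) (k j : ℕ)
    (hcase : (k = f {t} ∧ j < rk n f 2) ∨
      (0 < k ∧ k < f {t} ∧ j < rk n f 2 - 1)) :
    (HjGen n (Finset.univ.erase t)
        (fun I => min ((f I : ℤ)) ((f (insert t I) : ℤ) - (k : ℤ))) j).image
        (fun H => insert t H) =
      HjGen n Finset.univ (fun I => (f I : ℤ)) j \
        ((HjGen n Finset.univ (fun I => (f I : ℤ)) j).filter fun H => t ∉ H) :=
  stmt10_general n f hf t k j (hcase.imp And.left fun h => ⟨h.1, h.2.2⟩)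
end
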